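/- arXiv:1502.07263 — 2 statements merged into one kernel-verified Lean document; each statement's English description precedes it below -/
import Mathlib

section
/- Fix κ > 0 and define l : ℝ → ℝ by l(v) = 1 for v ≤ −π/κ, l(v) = (−κv − sin(κv))/(2π) + 1/2 for −π/κ ≤ v ≤ π/κ, and l(v) = 0 for v ≥ π/κ. Then l is twice continuously differentiable on ℝ, non-increasing, takes values in [0,1], its second derivative satisfies l''(v) = (κ²/(2π)) sin(κv) for v ∈ [−π/κ, π/κ] and l''(v) = 0 otherwise, and l''(v) ≥ −(κ²/π) l(v) for all v ∈ ℝ. -/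
noncomputable section

open Real

/-- The C² cutoff profile: l(v) = 1 for v ≤ −π/κ,
l(v) = (−κv − sin(κv))/(2π) + 1/2 for −π/κ ≤ v ≤ π/κ, and l(v) = 0 for v ≥ π/κ. -/
def lfun (κ : ℝ) (v : ℝ) : ℝ :=
  if v ≤ -(π / κ) then 1
  else if v ≤ π / κ then (-(κ * v) - Real.sin (κ * v)) / (2 * π) + 1 / 2
  else 0

/-!
In the variable `x = κ v` the profile is a ramp on `[-π, π]` extended by its end values. The first
two derivatives of the ramp, `-(1 + cos x) / (2π)` and `sin x / (2π)`, vanish at `±π`, so extending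
by end values commutes with differentiating twice. The lower bound on `l''` then becomes
`0 ≤ (π - 1) sin x + (π - x)` for `x ≤ π`.
-/

section Calculus

variable {𝕜 E : Type*} [NontriviallyNormedField 𝕜] [NormedAddCommGroup E] [NormedSpace 𝕜 E]

theorem hasDerivWithinAt_of_isClosed {f : 𝕜 → E} {f' : E} {s : Set 𝕜} {x : 𝕜} (hs : IsClosed s)
    (h : x ∈ s → HasDerivWithinAt f f' s x) : HasDerivWithinAt f f' s x := by
  by_cases hx : x ∈ s
  · exact h hx
  · exact HasFDerivWithinAt.of_notMem_closure (hs.closure_eq.symm ▸ hx)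

theorem contDiff_two_of_hasDerivAt {f f' f'' : 𝕜 → E} (hf : ∀ x, HasDerivAt f (f' x) x)
    (hf' : ∀ x, HasDerivAt f' (f'' x) x) (hf'' : Continuous f'') : ContDiff 𝕜 2 f := by
  have deriv_f : deriv f = f' := funext fun x => (hf x).deriv
  have deriv_f' : deriv f' = f'' := funext fun x => (hf' x).deriv
  have contDiff_f' : ContDiff 𝕜 1 f' :=
    contDiff_one_iff_deriv.2 ⟨fun x => (hf' x).differentiableAt, deriv_f' ▸ hf''⟩
  rw [← one_add_one_eq_two, contDiff_succ_iff_deriv, deriv_f]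
  exact ⟨fun x => (hf x).differentiableAt, by simp, contDiff_f'⟩

end Calculus

section ConstantExtension

variable {E : Type*} [NormedAddCommGroup E] [NormedSpace ℝ E]

theorem hasDerivAt_IccExtend {a b : ℝ} (hab : a ≤ b) {f f' : ℝ → E}
    (hf : ∀ x ∈ Set.Icc a b, HasDerivWithinAt f (f' x) (Set.Icc a b) x)
    (ha : f' a = 0) (hb : f' b = 0) (x : ℝ) :
    HasDerivAt (Set.IccExtend hab ((Set.Icc a b).domRestrict f))
      (Set.IccExtend hab ((Set.Icc a b).domRestrict f') x) x := by
  set F := Set.IccExtend hab ((Set.Icc a b).domRestrict f)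
  set F' := Set.IccExtend hab ((Set.Icc a b).domRestrict f')
  have left : HasDerivWithinAt F (F' x) (Set.Iic a) x :=
    hasDerivWithinAt_of_isClosed isClosed_Iic fun hx => by
      have hF' : F' x = 0 := (Set.IccExtend_of_le_left hab _ hx).trans ha
      rw [hF']
      exact (hasDerivWithinAt_const x _ (f a)).congr_of_mem
        (fun y hy => Set.IccExtend_of_le_left hab _ hy) hx
  have middle : HasDerivWithinAt F (F' x) (Set.Icc a b) x :=
    hasDerivWithinAt_of_isClosed isClosed_Icc fun hx => by
      have hF' : F' x = f' x := Set.IccExtend_of_mem hab _ hx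
      rw [hF']
      exact (hf x hx).congr_of_mem (fun y hy => Set.IccExtend_of_mem hab _ hy) hx
  have right : HasDerivWithinAt F (F' x) (Set.Ici b) x :=
    hasDerivWithinAt_of_isClosed isClosed_Ici fun hx => by
      have hF' : F' x = 0 := (Set.IccExtend_of_right_le hab _ hx).trans hb
      rw [hF']
      exact (hasDerivWithinAt_const x _ (f b)).congr_of_mem
        (fun y hy => Set.IccExtend_of_right_le hab _ hy) hx
  have glued := (left.union middle).union right
  rwa [Set.Iic_union_Icc_eq_Iic hab, Set.Iic_union_Ici, hasDerivWithinAt_univ] at glued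

end ConstantExtension

/-- The extension of the restriction of `f` to `[-π, π]` by its end values. Both the cutoff profile
and its derivatives have this form, up to scaling, so they can be handled without case splits. -/
def extendPi (f : ℝ → ℝ) : ℝ → ℝ :=
  Set.IccExtend (neg_le_self pi_nonneg) ((Set.Icc (-π) π).domRestrict f)

theorem extendPi_of_le_neg_pi (f : ℝ → ℝ) {x : ℝ} (hx : x ≤ -π) : extendPi f x = f (-π) :=
  Set.IccExtend_of_le_left _ _ hx

theorem extendPi_of_mem_Icc (f : ℝ → ℝ) {x : ℝ} (hx : x ∈ Set.Icc (-π) π) : extendPi f x = f x :=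
  Set.IccExtend_of_mem _ _ hx

theorem extendPi_of_pi_le (f : ℝ → ℝ) {x : ℝ} (hx : π ≤ x) : extendPi f x = f π :=
  Set.IccExtend_of_right_le _ _ hx

theorem extendPi_of_notMem_Icc {f : ℝ → ℝ} (hneg_pi : f (-π) = 0) (hpi : f π = 0) {x : ℝ}
    (hx : x ∉ Set.Icc (-π) π) : extendPi f x = 0 := by
  rcases lt_or_ge x (-π) with left | right
  · rw [extendPi_of_le_neg_pi f left.le, hneg_pi]
  · rw [extendPi_of_pi_le f (not_le.1 fun h => hx ⟨right, h⟩).le, hpi]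

theorem exists_mem_Icc_forall_extendPi_eq (x : ℝ) :
    ∃ y ∈ Set.Icc (-π) π, ∀ f, extendPi f x = f y :=
  ⟨_, (Set.projIcc (-π) π (neg_le_self pi_nonneg) x).2, fun _ => rfl⟩

theorem continuous_extendPi {f : ℝ → ℝ} (hf : ContinuousOn f (Set.Icc (-π) π)) :
    Continuous (extendPi f) :=
  hf.domRestrict.Icc_extend'

theorem antitone_extendPi {f : ℝ → ℝ} (hf : AntitoneOn f (Set.Icc (-π) π)) :
    Antitone (extendPi f) :=
  fun _ _ hxy => hf (Subtype.prop _) (Subtype.prop _) (Set.monotone_projIcc _ hxy)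

theorem hasDerivAt_extendPi_mul {f f' : ℝ → ℝ}
    (hf : ∀ x ∈ Set.Icc (-π) π, HasDerivWithinAt f (f' x) (Set.Icc (-π) π) x)
    (hneg_pi : f' (-π) = 0) (hpi : f' π = 0) (κ v : ℝ) :
    HasDerivAt (fun v => extendPi f (κ * v)) (κ * extendPi f' (κ * v)) v := by
  have hmul : HasDerivAt (fun v => κ * v) κ v := by
    simpa only [mul_one] using (hasDerivAt_id' v).const_mul κ
  exact ((hasDerivAt_IccExtend _ hf hneg_pi hpi (κ * v)).comp v hmul).congr_deriv (mul_comm _ _)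

/-- The middle piece of the cutoff profile in the rescaled variable `x = κ v`. -/
def sineRamp (x : ℝ) : ℝ := (-x - sin x) / (2 * π) + 1 / 2

theorem sineRamp_neg_pi : sineRamp (-π) = 1 := by
  simp only [sineRamp, sin_neg, sin_pi]
  field_simp
  ring

theorem sineRamp_pi : sineRamp π = 0 := by
  simp only [sineRamp, sin_pi]
  field_simp
  norm_num

theorem hasDerivAt_sineRamp (x : ℝ) : HasDerivAt sineRamp (-(1 + cos x) / (2 * π)) x :=
  ((((hasDerivAt_id' x).neg.sub (hasDerivAt_sin x)).div_const _).add_const _).congr_deriv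
    (by ring)

theorem hasDerivAt_deriv_sineRamp (x : ℝ) :
    HasDerivAt (fun x => -(1 + cos x) / (2 * π)) (sin x / (2 * π)) x :=
  (((hasDerivAt_cos x).const_add 1).neg.div_const _).congr_deriv (by rw [neg_neg])

theorem antitone_sineRamp : Antitone sineRamp := by
  refine antitone_of_hasDerivAt_nonpos hasDerivAt_sineRamp fun x => ?_
  exact div_nonpos_of_nonpos_of_nonneg (by linarith [neg_one_le_cos x]) two_pi_pos.le

theorem pi_sub_one_mul_sin_add_nonneg {x : ℝ} (hx : x ≤ π) : 0 ≤ (π - 1) * sin x + (π - x) := by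
  have pi_sub_one_nonneg : 0 ≤ π - 1 := by linarith [pi_gt_three]
  rcases le_total 0 x with h0 | h0
  · exact add_nonneg (mul_nonneg pi_sub_one_nonneg (sin_nonneg_of_nonneg_of_le_pi h0 hx))
      (sub_nonneg.2 hx)
  · have := mul_le_mul_of_nonneg_left (neg_one_le_sin x) pi_sub_one_nonneg
    linarith

theorem neg_two_mul_sineRamp_le_sin {x : ℝ} (hx : x ≤ π) : -(2 * sineRamp x) ≤ sin x := by
  have key : sin x + 2 * sineRamp x = ((π - 1) * sin x + (π - x)) / π := by
    unfold sineRamp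
    field_simp
    ring
  linarith [div_nonneg (pi_sub_one_mul_sin_add_nonneg hx) pi_nonneg]

section Profile

variable {κ : ℝ}

theorem mem_Icc_pi_div_iff (hκ : 0 < κ) {v : ℝ} :
    v ∈ Set.Icc (-(π / κ)) (π / κ) ↔ κ * v ∈ Set.Icc (-π) π := by
  rw [Set.mem_Icc, Set.mem_Icc, ← neg_div, div_le_iff₀' hκ, le_div_iff₀' hκ]

theorem lfun_eq_extendPi (hκ : 0 < κ) : lfun κ = fun v => extendPi sineRamp (κ * v) := by
  funext v
  have left_iff : v ≤ -(π / κ) ↔ κ * v ≤ -π := by rw [← neg_div, le_div_iff₀' hκ]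
  have right_iff : v ≤ π / κ ↔ κ * v ≤ π := le_div_iff₀' hκ
  simp only [lfun, left_iff, right_iff]
  split_ifs with left right
  · rw [extendPi_of_le_neg_pi _ left, sineRamp_neg_pi]
  · rw [extendPi_of_mem_Icc _ ⟨(not_le.1 left).le, right⟩, sineRamp]
  · rw [extendPi_of_pi_le _ (not_le.1 right).le, sineRamp_pi]

theorem hasDerivAt_lfun (hκ : 0 < κ) (v : ℝ) :
    HasDerivAt (lfun κ) (κ * extendPi (fun x => -(1 + cos x) / (2 * π)) (κ * v)) v := by
  rw [lfun_eq_extendPi hκ]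
  exact hasDerivAt_extendPi_mul (fun x _ => (hasDerivAt_sineRamp x).hasDerivWithinAt)
    (by simp) (by simp) κ v

theorem hasDerivAt_deriv_lfun (hκ : 0 < κ) (v : ℝ) :
    HasDerivAt (deriv (lfun κ)) (κ ^ 2 / (2 * π) * extendPi sin (κ * v)) v := by
  have deriv_lfun : deriv (lfun κ) =
      fun v => κ * extendPi (fun x => -(1 + cos x) / (2 * π)) (κ * v) :=
    funext fun v => (hasDerivAt_lfun hκ v).deriv
  have extendPi_div : extendPi (fun x => sin x / (2 * π)) (κ * v) =
      extendPi sin (κ * v) / (2 * π) := rfl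
  rw [deriv_lfun]
  refine ((hasDerivAt_extendPi_mul (fun x _ => (hasDerivAt_deriv_sineRamp x).hasDerivWithinAt)
    (by simp) (by simp) κ v).const_mul κ).congr_deriv ?_
  rw [extendPi_div]
  ring

theorem contDiff_two_lfun (hκ : 0 < κ) : ContDiff ℝ 2 (lfun κ) := by
  have continuous_extendPi_sin : Continuous (extendPi sin) :=
    continuous_extendPi continuous_sin.continuousOn
  exact contDiff_two_of_hasDerivAt (fun v => (hasDerivAt_lfun hκ v).differentiableAt.hasDerivAt)
    (hasDerivAt_deriv_lfun hκ) (by fun_prop)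

theorem antitone_lfun (hκ : 0 < κ) : Antitone (lfun κ) := by
  rw [lfun_eq_extendPi hκ]
  exact (antitone_extendPi (antitone_sineRamp.antitoneOn _)).comp_monotone
    (monotone_mul_left_of_nonneg hκ.le)

theorem lfun_mem_Icc (hκ : 0 < κ) (v : ℝ) : lfun κ v ∈ Set.Icc (0 : ℝ) 1 := by
  obtain ⟨y, ⟨neg_pi_le, le_pi⟩, hy⟩ := exists_mem_Icc_forall_extendPi_eq (κ * v)
  simp only [lfun_eq_extendPi hκ, hy]
  exact ⟨sineRamp_pi ▸ antitone_sineRamp le_pi, sineRamp_neg_pi ▸ antitone_sineRamp neg_pi_le⟩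

theorem deriv_deriv_lfun (hκ : 0 < κ) (v : ℝ) :
    deriv (deriv (lfun κ)) v = κ ^ 2 / (2 * π) * extendPi sin (κ * v) :=
  (hasDerivAt_deriv_lfun hκ v).deriv

theorem neg_mul_lfun_le_deriv_deriv_lfun (hκ : 0 < κ) (v : ℝ) :
    -(κ ^ 2 / π) * lfun κ v ≤ deriv (deriv (lfun κ)) v := by
  obtain ⟨y, ⟨-, le_pi⟩, hy⟩ := exists_mem_Icc_forall_extendPi_eq (κ * v)
  rw [deriv_deriv_lfun hκ, lfun_eq_extendPi hκ]
  calc -(κ ^ 2 / π) * extendPi sineRamp (κ * v)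
      = κ ^ 2 / (2 * π) * -(2 * sineRamp y) := by
        rw [hy]
        field_simp
    _ ≤ κ ^ 2 / (2 * π) * sin y :=
        mul_le_mul_of_nonneg_left (neg_two_mul_sineRamp_le_sin le_pi) (by positivity)
    _ = κ ^ 2 / (2 * π) * extendPi sin (κ * v) := by rw [hy]

end Profile

/-- The cutoff profile `lfun κ` is C², non-increasing, [0,1]-valued, its second
derivative is (κ²/(2π))sin(κv) on [−π/κ, π/κ] and 0 outside, and satisfies
l'' ≥ −(κ²/π) l everywhere. -/
theorem stmt16 (κ : ℝ) (hκ : 0 < κ) :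
    ContDiff ℝ 2 (lfun κ) ∧
    Antitone (lfun κ) ∧
    (∀ v, lfun κ v ∈ Set.Icc (0 : ℝ) 1) ∧
    (∀ v ∈ Set.Icc (-(π / κ)) (π / κ),
      deriv (deriv (lfun κ)) v = κ ^ 2 / (2 * π) * Real.sin (κ * v)) ∧
    (∀ v, v ∉ Set.Icc (-(π / κ)) (π / κ) → deriv (deriv (lfun κ)) v = 0) ∧
    (∀ v, -(κ ^ 2 / π) * lfun κ v ≤ deriv (deriv (lfun κ)) v) := by
  refine ⟨contDiff_two_lfun hκ, antitone_lfun hκ, lfun_mem_Icc hκ, fun v hv => ?_, fun v hv => ?_,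
    neg_mul_lfun_le_deriv_deriv_lfun hκ⟩
  · rw [deriv_deriv_lfun hκ, extendPi_of_mem_Icc sin ((mem_Icc_pi_div_iff hκ).1 hv)]
  · have hκv : κ * v ∉ Set.Icc (-π) π := (mem_Icc_pi_div_iff hκ).not.1 hv
    rw [deriv_deriv_lfun hκ, extendPi_of_notMem_Icc (by simp) sin_pi hκv, mul_zero]
end
end

section
/- Let d ∈ ℕ and σ > 0, and let γ_σ be the Gaussian probability measure on ℝ^d with density (2πσ)^{−d/2} e^{−|y|²/(2σ)} with respect to the Lebesgue measure. Then for every smooth f : ℝ^d → (0,∞) such that f, f ln f and |∇f|²/f are integrable with respect to γ_σ, one has Ent_{γ_σ}(f) ≤ (σ/2) ∫ (|∇f|²/f) dγ_σ, where Ent_{γ_σ}(f) = ∫ f ln f dγ_σ − (∫ f dγ_σ) ln(∫ f dγ_σ). -/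
noncomputable section

open MeasureTheory

/-- The Gaussian measure on ℝ^d with density (2πσ)^{−d/2} e^{−|y|²/(2σ)}
with respect to the Lebesgue measure. -/
def gaussMeasure (d : ℕ) (σ : ℝ) : Measure (EuclideanSpace ℝ (Fin d)) :=
  volume.withDensity fun y =>
    ENNReal.ofReal ((2 * Real.pi * σ) ^ (-(d : ℝ) / 2) * Real.exp (-‖y‖ ^ 2 / (2 * σ)))

/-!
Logarithmic Sobolev constants add up under convolution: `Ent_{μ ∗ ν}(f)` is the `μ`-average of the
`ν`-entropies of the translates of `f`, plus the `μ`-entropy of the average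
`P f (x) = ∫ f(x + z) dν(z)`, and `I_μ(P f) ≤ I_{μ ∗ ν}(f)` by Jensen's inequality. For a Gaussian
of small variance `h`, a Taylor expansion of the entropy around the constant `f 0` gives the
inequality with the sharp constant `h / 2` up to an error `o(h)`, for functions which are bounded
away from zero and have a uniformly continuous gradient. Writing `γ_σ` as the convolution of `n`
Gaussians of variance `σ / n` and letting `n → ∞` removes the error, and truncation then reaches
every integrable `f`.
-/

namespace GaussianLogSobolev

open Filter InformationTheory ProbabilityTheory Topology
open scoped RealInnerProductSpace

section Entropy

variable {Ω : Type*} [MeasurableSpace Ω]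

/-- The entropy `Ent_μ(f) = ∫ f ln f dμ - (∫ f dμ) ln (∫ f dμ)` of a nonnegative function. -/
def entropy (μ : Measure Ω) (f : Ω → ℝ) : ℝ :=
  ∫ x, f x * Real.log (f x) ∂μ - (∫ x, f x ∂μ) * Real.log (∫ x, f x ∂μ)

lemma mul_klFun_div {c : ℝ} (hc : c ≠ 0) (u : ℝ) :
    c * klFun (u / c) = u * Real.log u - u * Real.log c - (u - c) := by
  rcases eq_or_ne u 0 with rfl | hu
  · simp [klFun_zero]
  · rw [klFun_apply, Real.log_div hu hc]
    field_simp
    ring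

lemma entropy_le_integral_mul_klFun_div {μ : Measure Ω} [IsProbabilityMeasure μ] {f : Ω → ℝ}
    (hf : Integrable f μ) (hflog : Integrable (fun x => f x * Real.log (f x)) μ)
    (hf₀ : ∀ x, 0 ≤ f x) {c : ℝ} (hc : 0 < c) :
    entropy μ f ≤ ∫ x, c * klFun (f x / c) ∂μ := by
  have hmean : 0 ≤ c * klFun ((∫ x, f x ∂μ) / c) :=
    mul_nonneg hc.le (klFun_nonneg (div_nonneg (integral_nonneg hf₀) hc.le))
  have hlog : Integrable (fun x => f x * Real.log (f x) - f x * Real.log c) μ :=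
    hflog.sub (hf.mul_const _)
  have hsub : Integrable (fun x => f x - c) μ := hf.sub (integrable_const c)
  simp_rw [mul_klFun_div hc.ne'] at hmean ⊢
  rw [integral_sub hlog hsub, integral_sub hflog (hf.mul_const _), integral_mul_const,
    integral_sub hf (integrable_const c), integral_const, probReal_univ, one_smul, entropy]
  linarith

private lemma klFun_le_of_one_le {t : ℝ} (ht : 1 ≤ t) : klFun t ≤ (t - 1) ^ 2 / 2 := by
  have htpos : 0 < t := one_pos.trans_le ht
  have hlog : Real.log t ≤ (t - t⁻¹) / 2 := by
    simpa [Real.sinh_eq, Real.exp_neg, Real.exp_log htpos] using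
      Real.self_le_sinh_iff.2 (Real.log_nonneg ht)
  calc klFun t = t * Real.log t + 1 - t := klFun_apply t
    _ ≤ t * ((t - t⁻¹) / 2) + 1 - t := by gcongr
    _ = (t - 1) ^ 2 / 2 := by field_simp; ring

private lemma klFun_le_of_le_one {t : ℝ} (ht : 0 < t) (ht₁ : t ≤ 1) :
    klFun t ≤ (t - 1) ^ 2 / 2 + (1 - t) ^ 3 / 2 := by
  have hlog : Real.log t ≤ 2 * (t - 1) / (t + 1) := by
    have h := Real.le_log_one_add_of_nonneg (sub_nonneg.2 ((one_le_inv₀ ht).2 ht₁))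
    rw [add_sub_cancel, Real.log_inv] at h
    have hpade : 2 * (t⁻¹ - 1) / (t⁻¹ - 1 + 2) = -(2 * (t - 1) / (t + 1)) := by
      have hden : t⁻¹ - 1 + 2 = (t + 1) / t := by
        field_simp
        ring
      rw [hden]
      field_simp
      ring
    linarith
  have hgap : 0 ≤ (1 - t) ^ 3 * t / (2 * (t + 1)) := by
    have := sub_nonneg.2 ht₁
    positivity
  calc klFun t = t * Real.log t + 1 - t := klFun_apply t
    _ ≤ t * (2 * (t - 1) / (t + 1)) + 1 - t := by gcongr
    _ = (t - 1) ^ 2 / 2 + (1 - t) ^ 3 / 2 - (1 - t) ^ 3 * t / (2 * (t + 1)) := by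
      field_simp
      ring
    _ ≤ _ := sub_le_self _ hgap

lemma klFun_le_sq_add_abs_cube {t : ℝ} (ht : 0 < t) :
    klFun t ≤ (t - 1) ^ 2 / 2 + |t - 1| ^ 3 / 2 := by
  rcases le_total 1 t with h | h
  · exact (klFun_le_of_one_le h).trans (le_add_of_nonneg_right (by positivity))
  · rw [abs_sub_comm, abs_of_nonneg (sub_nonneg.2 h)]
    exact klFun_le_of_le_one ht h

lemma mul_klFun_div_le {c u : ℝ} (hc : 0 < c) (hu : 0 < u) :
    c * klFun (u / c) ≤ (u - c) ^ 2 / (2 * c) + |u - c| ^ 3 / (2 * c ^ 2) := by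
  have hdiv : u / c - 1 = (u - c) / c := by field_simp
  calc c * klFun (u / c) ≤ c * ((u / c - 1) ^ 2 / 2 + |u / c - 1| ^ 3 / 2) := by
        gcongr
        exact klFun_le_sq_add_abs_cube (div_pos hu hc)
    _ = (u - c) ^ 2 / (2 * c) + |u - c| ^ 3 / (2 * c ^ 2) := by
      rw [hdiv, abs_div, abs_of_pos hc]
      field_simp

end Entropy

section TranslateAverage

variable {E F : Type*} [NormedAddCommGroup E] [MeasurableSpace E] [NormedAddCommGroup F]
  [NormedSpace ℝ F] {μ ν : Measure E} {f : E → F}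

/-- The average `x ↦ E[f(x + Z)]` of `f`, where `Z` has law `ν`. For Gaussian `ν` this is the heat
semigroup. -/
def translateAverage (ν : Measure E) (f : E → F) (x : E) : F := ∫ z, f (x + z) ∂ν

lemma norm_translateAverage_le [IsProbabilityMeasure ν] {B : ℝ} (hB : ∀ x, ‖f x‖ ≤ B) (x : E) :
    ‖translateAverage ν f x‖ ≤ B := by
  simpa [translateAverage] using
    norm_integral_le_of_norm_le_const (μ := ν) (ae_of_all _ fun z => hB (x + z))

variable [BorelSpace E] [SecondCountableTopology E]

lemma continuous_translateAverage [IsFiniteMeasure ν] (hf : Continuous f) {B : ℝ}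
    (hB : ∀ x, ‖f x‖ ≤ B) : Continuous (translateAverage ν f) :=
  continuous_of_dominated (bound := fun _ => B)
    (fun x => (hf.comp (continuous_const_add x)).aestronglyMeasurable)
    (fun x => ae_of_all _ fun z => hB (x + z)) (integrable_const B)
    (ae_of_all _ fun z => hf.comp (continuous_add_const z))

lemma integrable_translateAverage [SFinite μ] [SFinite ν] (hf : Integrable f (μ ∗ ν)) :
    Integrable (translateAverage ν f) μ :=
  ((integrable_map_measure hf.1 (by fun_prop)).1 hf).integral_prod_left

lemma entropy_conv [SFinite μ] [SFinite ν] {f : E → ℝ} (hf : Integrable f (μ ∗ ν))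
    (hflog : Integrable (fun x => f x * Real.log (f x)) (μ ∗ ν))
    (havg : Integrable
      (fun x => translateAverage ν f x * Real.log (translateAverage ν f x)) μ) :
    entropy (μ ∗ ν) f =
      ∫ x, entropy ν (fun z => f (x + z)) ∂μ + entropy μ (translateAverage ν f) := by
  have hinner := integral_sub (integrable_translateAverage hflog) havg
  simp only [translateAverage] at hinner
  simp only [entropy, translateAverage, integral_conv hf, integral_conv hflog, hinner]
  ring

end TranslateAverage

section FisherInformation

variable {E : Type*} [NormedAddCommGroup E] [InnerProductSpace ℝ E]

lemma two_mul_inner_sub_le_norm_sq_div {p : ℝ} (hp : 0 < p) (a v : E) :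
    2 * ⟪v, a⟫ - ‖v‖ ^ 2 * p ≤ ‖a‖ ^ 2 / p := by
  have hsq : 0 ≤ ‖a - p • v‖ ^ 2 / p := by positivity
  have hexpand : ‖a - p • v‖ ^ 2 / p = ‖a‖ ^ 2 / p - (2 * ⟪v, a⟫ - ‖v‖ ^ 2 * p) := by
    rw [norm_sub_sq_real, norm_smul, mul_pow, Real.norm_eq_abs, sq_abs, real_inner_smul_right,
      real_inner_comm]
    field_simp
    ring
  linarith

lemma two_mul_inner_inv_smul_sub (p : ℝ) (a : E) :
    2 * ⟪p⁻¹ • a, a⟫ - ‖p⁻¹ • a‖ ^ 2 * p = ‖a‖ ^ 2 / p := by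
  rw [real_inner_smul_left, real_inner_self_eq_norm_sq, norm_smul, mul_pow, norm_inv,
    Real.norm_eq_abs, inv_pow, sq_abs]
  rcases eq_or_ne p 0 with rfl | hp
  · simp
  · field_simp
    ring

/-- Jensen's inequality for the jointly convex function `(a, p) ↦ ‖a‖² / p`. -/
lemma norm_integral_sq_div_le [CompleteSpace E] {Ω : Type*} [MeasurableSpace Ω] {μ : Measure Ω}
    {f : Ω → ℝ} {g : Ω → E} (hf : Integrable f μ) (hg : Integrable g μ)
    (hgf : Integrable (fun x => ‖g x‖ ^ 2 / f x) μ) (hpos : ∀ x, 0 < f x) :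
    ‖∫ x, g x ∂μ‖ ^ 2 / ∫ x, f x ∂μ ≤ ∫ x, ‖g x‖ ^ 2 / f x ∂μ := by
  set a := ∫ x, g x ∂μ
  set p := ∫ x, f x ∂μ
  have htangent := integral_mono (((hg.const_inner (p⁻¹ • a)).const_mul 2).sub
    (hf.const_mul (‖p⁻¹ • a‖ ^ 2))) hgf
    fun x => two_mul_inner_sub_le_norm_sq_div (hpos x) (g x) (p⁻¹ • a)
  calc ‖a‖ ^ 2 / p = 2 * ⟪p⁻¹ • a, a⟫ - ‖p⁻¹ • a‖ ^ 2 * p :=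
        (two_mul_inner_inv_smul_sub p a).symm
    _ = ∫ x, (2 * ⟪p⁻¹ • a, g x⟫ - ‖p⁻¹ • a‖ ^ 2 * f x) ∂μ := by
        rw [integral_sub ((hg.const_inner _).const_mul 2) (hf.const_mul _), integral_const_mul,
          integral_const_mul, integral_inner hg]
    _ ≤ _ := htangent

variable [CompleteSpace E]

lemma gradient_comp_const_add (f : E → ℝ) (a : E) :
    gradient (fun z => f (a + z)) = fun x => gradient f (a + x) := by
  ext x : 1
  rw [gradient, gradient, fderiv_comp_add_left]

lemma norm_gradient (f : E → ℝ) (x : E) : ‖gradient f x‖ = ‖fderiv ℝ f x‖ :=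
  LinearIsometryEquiv.norm_map _ _

lemma continuous_gradient {f : E → ℝ} (hf : ContDiff ℝ 1 f) : Continuous (gradient f) :=
  (InnerProductSpace.toDual ℝ E).symm.continuous.comp (hf.continuous_fderiv one_ne_zero)

variable [MeasurableSpace E]

/-- The Fisher information `I_μ(f) = ∫ ‖∇f‖² / f dμ`. -/
def fisherInfo (μ : Measure E) (f : E → ℝ) : ℝ := ∫ x, ‖gradient f x‖ ^ 2 / f x ∂μ

lemma translateAverage_norm_gradient_sq_div (ν : Measure E) (f : E → ℝ) (x : E) :
    translateAverage ν (fun y => ‖gradient f y‖ ^ 2 / f y) x =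
      fisherInfo ν (fun z => f (x + z)) := by
  simp only [translateAverage, fisherInfo, gradient_comp_const_add]

variable [BorelSpace E] [SecondCountableTopology E] {μ ν : Measure E} {f : E → ℝ}

lemma fisherInfo_conv [SFinite μ] [SFinite ν]
    (hf : Integrable (fun x => ‖gradient f x‖ ^ 2 / f x) (μ ∗ ν)) :
    fisherInfo (μ ∗ ν) f = ∫ x, fisherInfo ν (fun z => f (x + z)) ∂μ := by
  simp only [fisherInfo, gradient_comp_const_add, integral_conv hf]

lemma hasGradientAt_translateAverage [IsFiniteMeasure ν] (hf : ContDiff ℝ 1 f)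
    (hint : ∀ x, Integrable (fun z => f (x + z)) ν) {L : ℝ} (hL : ∀ x, ‖gradient f x‖ ≤ L) (x : E) :
    HasGradientAt (translateAverage ν f) (translateAverage ν (gradient f) x) x := by
  have hderiv := hasFDerivAt_integral_of_dominated_of_fderiv_le (μ := ν) (x₀ := x) (s := Set.univ)
    (F := fun y z => f (y + z)) (F' := fun y z => fderiv ℝ f (y + z)) (bound := fun _ => L)
    univ_mem (Eventually.of_forall fun y => (hint y).1) (hint x)
    ((hf.continuous_fderiv one_ne_zero).comp (continuous_const_add x)).aestronglyMeasurable
    (ae_of_all _ fun z y _ => (norm_gradient f (y + z)).symm.trans_le (hL _)) (integrable_const L)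
    (ae_of_all _ fun z y _ => (hasFDerivAt_comp_add_right z).2
      (hf.differentiable one_ne_zero _).hasFDerivAt)
  rw [hasGradientAt_iff_hasFDerivAt]
  convert! hderiv using 1
  rw [translateAverage]
  simpa using ((InnerProductSpace.toDual ℝ E).toContinuousLinearEquiv.integral_comp_comm (μ := ν)
    (fun z => gradient f (x + z))).symm

end FisherInformation

section Admissible

variable {E : Type*} [NormedAddCommGroup E] [InnerProductSpace ℝ E] [CompleteSpace E]
  {ε L δ K : ℝ} {f : E → ℝ}

/-- The class of test functions for which the logarithmic Sobolev inequality is first proved: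
bounded `C¹` functions with values above `ε > 0` and gradient bounded by `L`, whose gradient has
the affine modulus of continuity `r ↦ δ + K * r`. A gradient which is merely uniformly continuous
satisfies the last condition with `δ` arbitrarily small, so no second derivative is needed. -/
structure IsAdmissible (ε L δ K : ℝ) (f : E → ℝ) : Prop where
  eps_pos : 0 < ε
  K_nonneg : 0 ≤ K
  contDiff : ContDiff ℝ 1 f
  le : ∀ x, ε ≤ f x
  bddAbove : BddAbove (Set.range f)
  norm_gradient_le : ∀ x, ‖gradient f x‖ ≤ L
  norm_gradient_sub_le : ∀ x y, ‖gradient f y - gradient f x‖ ≤ δ + K * ‖y - x‖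

namespace IsAdmissible

lemma pos (hf : IsAdmissible ε L δ K f) (x : E) : 0 < f x := hf.eps_pos.trans_le (hf.le x)

lemma L_nonneg (hf : IsAdmissible ε L δ K f) : 0 ≤ L :=
  (norm_nonneg _).trans (hf.norm_gradient_le 0)

lemma δ_nonneg (hf : IsAdmissible ε L δ K f) : 0 ≤ δ := by
  simpa using hf.norm_gradient_sub_le 0 0

lemma exists_norm_le (hf : IsAdmissible ε L δ K f) : ∃ M, ∀ x, ‖f x‖ ≤ M := by
  obtain ⟨M, hM⟩ := hf.bddAbove
  exact ⟨M, fun x => by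
    simpa only [Real.norm_of_nonneg (hf.pos x).le] using hM (Set.mem_range_self x)⟩

lemma norm_gradient_sq_div_le (hf : IsAdmissible ε L δ K f) (x : E) :
    ‖gradient f x‖ ^ 2 / f x ≤ L ^ 2 / ε :=
  div_le_div₀ (sq_nonneg L) (pow_le_pow_left₀ (norm_nonneg _) (hf.norm_gradient_le x) 2)
    hf.eps_pos (hf.le x)

lemma comp_const_add (hf : IsAdmissible ε L δ K f) (a : E) :
    IsAdmissible ε L δ K (fun z => f (a + z)) where
  eps_pos := hf.eps_pos
  K_nonneg := hf.K_nonneg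
  contDiff := hf.contDiff.comp (contDiff_const.add contDiff_id)
  le z := hf.le (a + z)
  bddAbove := hf.bddAbove.mono (Set.range_comp_subset_range (a + ·) f)
  norm_gradient_le z := by
    rw [gradient_comp_const_add]
    exact hf.norm_gradient_le _
  norm_gradient_sub_le x y := by
    simpa only [gradient_comp_const_add, add_sub_add_left_eq_sub] using
      hf.norm_gradient_sub_le (a + x) (a + y)

lemma abs_sub_le (hf : IsAdmissible ε L δ K f) (x y : E) : |f y - f x| ≤ L * ‖y - x‖ :=
  convex_univ.norm_image_sub_le_of_norm_fderiv_le
    (fun z _ => hf.contDiff.differentiable one_ne_zero z)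
    (fun z _ => (norm_gradient f z).symm.trans_le (hf.norm_gradient_le z))
    (Set.mem_univ x) (Set.mem_univ y)

lemma abs_sub_sub_inner_le (hf : IsAdmissible ε L δ K f) (x y : E) :
    |f y - f x - ⟪gradient f x, y - x⟫| ≤ (δ + K * ‖y - x‖) * ‖y - x‖ := by
  have hmodulus : ∀ z ∈ segment ℝ x y, ‖fderiv ℝ f z - fderiv ℝ f x‖ ≤ δ + K * ‖y - x‖ := by
    intro z hz
    rw [← (InnerProductSpace.toDual ℝ E).symm.norm_map, map_sub]
    refine (hf.norm_gradient_sub_le x z).trans ?_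
    have := hf.K_nonneg
    gcongr
    exact norm_sub_le_of_mem_segment hz
  have htaylor := (convex_segment x y).norm_image_sub_le_of_norm_fderiv_le'
    (fun z _ => hf.contDiff.differentiable one_ne_zero z) hmodulus
    (left_mem_segment ℝ x y) (right_mem_segment ℝ x y)
  rwa [gradient, InnerProductSpace.toDual_symm_apply]

lemma sq_sub_le (hf : IsAdmissible ε L δ K f) (x y : E) :
    (f y - f x) ^ 2 ≤ ⟪gradient f x, y - x⟫ ^ 2 +
      2 * L * ‖y - x‖ * ((δ + K * ‖y - x‖) * ‖y - x‖) := by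
  set u := f y - f x
  set l := ⟪gradient f x, y - x⟫
  have hl : |l| ≤ L * ‖y - x‖ :=
    (abs_real_inner_le_norm _ _).trans
      (mul_le_mul_of_nonneg_right (hf.norm_gradient_le x) (norm_nonneg _))
  have hsum : |u + l| ≤ 2 * L * ‖y - x‖ := by linarith [abs_add_le u l, hf.abs_sub_le x y]
  calc u ^ 2 = l ^ 2 + (u + l) * (u - l) := by ring
    _ ≤ l ^ 2 + |u + l| * |u - l| := by grw [le_abs_self ((u + l) * (u - l)), abs_mul]
    _ ≤ _ := by
      have := hf.L_nonneg
      gcongr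
      exact hf.abs_sub_sub_inner_le x y

protected lemma mul_klFun_div_le (hf : IsAdmissible ε L δ K f) (x y : E) :
    f x * klFun (f y / f x) ≤ ⟪gradient f x, y - x⟫ ^ 2 / (2 * f x) +
      L * δ / ε * ‖y - x‖ ^ 2 + (L * K / ε + L ^ 3 / (2 * ε ^ 2)) * ‖y - x‖ ^ 3 := by
  have hε := hf.eps_pos
  have hL := hf.L_nonneg
  have hδ := hf.δ_nonneg
  have hK := hf.K_nonneg
  have hx := hf.pos x
  have hεx := hf.le x
  set r := ‖y - x‖
  calc f x * klFun (f y / f x)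
      ≤ (f y - f x) ^ 2 / (2 * f x) + |f y - f x| ^ 3 / (2 * f x ^ 2) :=
        mul_klFun_div_le hx (hf.pos y)
    _ ≤ (⟪gradient f x, y - x⟫ ^ 2 + 2 * L * r * ((δ + K * r) * r)) / (2 * f x) +
          (L * r) ^ 3 / (2 * f x ^ 2) := by
        gcongr
        · exact hf.sq_sub_le x y
        · exact hf.abs_sub_le x y
    _ = ⟪gradient f x, y - x⟫ ^ 2 / (2 * f x) + 2 * L * r * ((δ + K * r) * r) / (2 * f x) +
          (L * r) ^ 3 / (2 * f x ^ 2) := by rw [add_div]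
    _ ≤ ⟪gradient f x, y - x⟫ ^ 2 / (2 * f x) + 2 * L * r * ((δ + K * r) * r) / (2 * ε) +
          (L * r) ^ 3 / (2 * ε ^ 2) := by gcongr
    _ = _ := by
        field_simp
        ring

lemma norm_gradient_sq_div_le_add (hf : IsAdmissible ε L δ K f) (x y : E) :
    ‖gradient f x‖ ^ 2 / f x ≤ ‖gradient f y‖ ^ 2 / f y + 2 * (L * δ / ε) +
      2 * (L * K / ε + L ^ 3 / (2 * ε ^ 2)) * ‖y - x‖ := by
  have hε := hf.eps_pos
  have hL := hf.L_nonneg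
  set v := (f x)⁻¹ • gradient f x with hv
  have hv_norm : ‖v‖ ≤ L / ε := by
    rw [hv, norm_smul, norm_inv, Real.norm_of_nonneg (hf.pos x).le, inv_mul_eq_div]
    exact div_le_div₀ hL (hf.norm_gradient_le x) hε (hf.le x)
  have hbase : 2 * ⟪v, gradient f x⟫ - ‖v‖ ^ 2 * f x = ‖gradient f x‖ ^ 2 / f x :=
    two_mul_inner_inv_smul_sub _ _
  have hinner : -⟪v, gradient f y - gradient f x⟫ ≤ L / ε * (δ + K * ‖y - x‖) := by
    grw [neg_le_abs, abs_real_inner_le_norm, hv_norm, hf.norm_gradient_sub_le x y]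
  have hvalue : ‖v‖ ^ 2 * (f y - f x) ≤ (L / ε) ^ 2 * (L * ‖y - x‖) := by
    grw [le_abs_self (f y - f x), hf.abs_sub_le x y, hv_norm]
  have htangent := two_mul_inner_sub_le_norm_sq_div (hf.pos y) (gradient f y) v
  have herror : 2 * (L / ε * (δ + K * ‖y - x‖)) + (L / ε) ^ 2 * (L * ‖y - x‖) =
      2 * (L * δ / ε) + 2 * (L * K / ε + L ^ 3 / (2 * ε ^ 2)) * ‖y - x‖ := by
    field_simp
    ring
  rw [inner_sub_right] at hinner
  linarith

variable [MeasurableSpace E] [BorelSpace E] {μ ν : Measure E}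

protected lemma integrable [IsFiniteMeasure μ] (hf : IsAdmissible ε L δ K f) : Integrable f μ :=
  let ⟨M, hM⟩ := hf.exists_norm_le
  .of_bound hf.contDiff.continuous.aestronglyMeasurable M (ae_of_all _ hM)

lemma integrable_mul_log [IsFiniteMeasure μ] (hf : IsAdmissible ε L δ K f) :
    Integrable (fun x => f x * Real.log (f x)) μ := by
  obtain ⟨M, hM⟩ := hf.bddAbove
  obtain ⟨B, hB⟩ := isCompact_Icc.exists_bound_of_continuousOn
    (Real.continuous_mul_log.continuousOn (s := Set.Icc ε M))
  exact .of_bound (Real.continuous_mul_log.comp hf.contDiff.continuous).aestronglyMeasurable B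
    (ae_of_all _ fun x => hB (f x) ⟨hf.le x, hM (Set.mem_range_self x)⟩)

lemma integrable_norm_gradient_sq_div [IsFiniteMeasure μ] (hf : IsAdmissible ε L δ K f) :
    Integrable (fun x => ‖gradient f x‖ ^ 2 / f x) μ := by
  have hcont : Continuous fun x => ‖gradient f x‖ ^ 2 / f x :=
    ((continuous_gradient hf.contDiff).norm.pow 2).div hf.contDiff.continuous
      fun x => (hf.pos x).ne'
  refine .of_bound hcont.aestronglyMeasurable (L ^ 2 / ε) (ae_of_all _ fun x => ?_)
  rw [Real.norm_of_nonneg (div_nonneg (sq_nonneg _) (hf.pos x).le)]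
  exact hf.norm_gradient_sq_div_le x

variable [SecondCountableTopology E]

lemma integrable_gradient [IsFiniteMeasure μ] (hf : IsAdmissible ε L δ K f) :
    Integrable (gradient f) μ :=
  .of_bound (continuous_gradient hf.contDiff).aestronglyMeasurable L
    (ae_of_all _ hf.norm_gradient_le)

protected lemma hasGradientAt_translateAverage [IsFiniteMeasure ν] (hf : IsAdmissible ε L δ K f)
    (x : E) : HasGradientAt (translateAverage ν f) (translateAverage ν (gradient f) x) x :=
  hasGradientAt_translateAverage hf.contDiff
    (fun x => (hf.comp_const_add x).integrable) hf.norm_gradient_le x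

lemma gradient_translateAverage [IsFiniteMeasure ν] (hf : IsAdmissible ε L δ K f) :
    gradient (translateAverage ν f) = translateAverage ν (gradient f) :=
  funext fun x => (hf.hasGradientAt_translateAverage x).gradient

lemma contDiff_translateAverage [IsFiniteMeasure ν] (hf : IsAdmissible ε L δ K f) :
    ContDiff ℝ 1 (translateAverage ν f) :=
  contDiff_one_iff_hasFDerivAt.2
    ⟨fun x => InnerProductSpace.toDual ℝ E (translateAverage ν (gradient f) x),
      (InnerProductSpace.toDual ℝ E).continuous.comp
        (continuous_translateAverage (continuous_gradient hf.contDiff) hf.norm_gradient_le),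
      fun x => (hf.hasGradientAt_translateAverage x).hasFDerivAt⟩

lemma integrable_gradient_const_add [IsFiniteMeasure ν] (hf : IsAdmissible ε L δ K f) (x : E) :
    Integrable (fun z => gradient f (x + z)) ν := by
  simpa only [gradient_comp_const_add] using (hf.comp_const_add x).integrable_gradient (μ := ν)

protected lemma translateAverage [IsProbabilityMeasure ν] (hf : IsAdmissible ε L δ K f) :
    IsAdmissible ε L δ K (translateAverage ν f) where
  eps_pos := hf.eps_pos
  K_nonneg := hf.K_nonneg
  contDiff := hf.contDiff_translateAverage
  le x := by
    simpa [translateAverage] using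
      integral_mono (μ := ν) (integrable_const ε) (hf.comp_const_add x).integrable
        fun z => hf.le (x + z)
  bddAbove := by
    obtain ⟨M, hM⟩ := hf.exists_norm_le
    refine ⟨M, ?_⟩
    rintro _ ⟨x, rfl⟩
    exact (le_abs_self _).trans (norm_translateAverage_le hM x)
  norm_gradient_le := by
    rw [hf.gradient_translateAverage]
    exact norm_translateAverage_le hf.norm_gradient_le
  norm_gradient_sub_le x y := by
    rw [hf.gradient_translateAverage, translateAverage, translateAverage,
      ← integral_sub (hf.integrable_gradient_const_add y) (hf.integrable_gradient_const_add x)]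
    simpa using norm_integral_le_of_norm_le_const (μ := ν) (ae_of_all _ fun z => by
      simpa only [add_sub_add_right_eq_sub] using hf.norm_gradient_sub_le (x + z) (y + z))

lemma fisherInfo_translateAverage_le [IsFiniteMeasure μ] [IsProbabilityMeasure ν]
    (hf : IsAdmissible ε L δ K f) :
    fisherInfo μ (translateAverage ν f) ≤ fisherInfo (μ ∗ ν) f := by
  have hI : Integrable (fun x => ‖gradient f x‖ ^ 2 / f x) (μ ∗ ν) :=
    hf.integrable_norm_gradient_sq_div
  rw [fisherInfo_conv hI]
  refine integral_mono hf.translateAverage.integrable_norm_gradient_sq_div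
    ((integrable_translateAverage hI).congr
      (ae_of_all _ (translateAverage_norm_gradient_sq_div ν f))) fun x => ?_
  have hjensen := norm_integral_sq_div_le (hf.comp_const_add x).integrable
    (hf.comp_const_add x).integrable_gradient
    (hf.comp_const_add x).integrable_norm_gradient_sq_div (hf.comp_const_add x).pos (μ := ν)
  simpa only [hf.gradient_translateAverage, translateAverage, fisherInfo,
    gradient_comp_const_add] using hjensen

end IsAdmissible

end Admissible

section LogSobolevUpTo

variable {E : Type*} [NormedAddCommGroup E] [InnerProductSpace ℝ E] [CompleteSpace E]
  [MeasurableSpace E] {ε L δ K C C' e e' : ℝ} {μ ν : Measure E}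

/-- The logarithmic Sobolev inequality with constant `C` and additive error `e`, for the admissible
functions with given parameters. -/
def LogSobolevUpTo (ε L δ K : ℝ) (μ : Measure E) (C e : ℝ) : Prop :=
  ∀ f, IsAdmissible ε L δ K f → entropy μ f ≤ C * fisherInfo μ f + e

variable [BorelSpace E] [IsProbabilityMeasure μ] {f : E → ℝ}

lemma IsAdmissible.entropy_le (hf : IsAdmissible ε L δ K f) (hμ : MemLp id 3 μ) :
    entropy μ f ≤ (∫ z, ⟪gradient f 0, z⟫ ^ 2 ∂μ) / (2 * f 0) + L * δ / ε * ∫ z, ‖z‖ ^ 2 ∂μ +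
      (L * K / ε + L ^ 3 / (2 * ε ^ 2)) * ∫ z, ‖z‖ ^ 3 ∂μ := by
  have hμ₂ : MemLp id 2 μ := hμ.mono_exponent (by norm_num)
  have hsq : Integrable (fun z => ‖z‖ ^ 2) μ := hμ₂.integrable_norm_pow'
  have hcube : Integrable (fun z => ‖z‖ ^ 3) μ := hμ.integrable_norm_pow'
  have hinner : Integrable (fun z => ⟪gradient f 0, z⟫ ^ 2) μ :=
    (hμ₂.const_inner (gradient f 0)).integrable_sq
  have hklFun : Integrable (fun z => f 0 * klFun (f z / f 0)) μ := by
    simp_rw [mul_klFun_div (hf.pos 0).ne']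
    exact (hf.integrable_mul_log.sub (hf.integrable.mul_const _)).sub
      (hf.integrable.sub (integrable_const _))
  have hmain : Integrable (fun z => ⟪gradient f 0, z⟫ ^ 2 / (2 * f 0) + L * δ / ε * ‖z‖ ^ 2) μ :=
    (hinner.div_const _).add (hsq.const_mul _)
  calc entropy μ f ≤ ∫ z, f 0 * klFun (f z / f 0) ∂μ :=
        entropy_le_integral_mul_klFun_div hf.integrable hf.integrable_mul_log
          (fun z => (hf.pos z).le) (hf.pos 0)
    _ ≤ ∫ z, (⟪gradient f 0, z⟫ ^ 2 / (2 * f 0) + L * δ / ε * ‖z‖ ^ 2 +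
          (L * K / ε + L ^ 3 / (2 * ε ^ 2)) * ‖z‖ ^ 3) ∂μ :=
        integral_mono hklFun (hmain.add (hcube.const_mul _)) fun z => by
          simpa only [sub_zero] using hf.mul_klFun_div_le 0 z
    _ = _ := by
        rw [integral_add hmain (hcube.const_mul _),
          integral_add (hinner.div_const _) (hsq.const_mul _), integral_div, integral_const_mul,
          integral_const_mul]

lemma IsAdmissible.norm_gradient_zero_sq_div_le (hf : IsAdmissible ε L δ K f)
    (hμ : Integrable (fun z => ‖z‖) μ) :
    ‖gradient f 0‖ ^ 2 / f 0 ≤ fisherInfo μ f + 2 * (L * δ / ε) +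
      2 * (L * K / ε + L ^ 3 / (2 * ε ^ 2)) * ∫ z, ‖z‖ ∂μ := by
  have hfisher := hf.integrable_norm_gradient_sq_div (μ := μ)
  have hmain : Integrable (fun z => ‖gradient f z‖ ^ 2 / f z + 2 * (L * δ / ε)) μ :=
    hfisher.add (integrable_const _)
  calc ‖gradient f 0‖ ^ 2 / f 0 = ∫ _, ‖gradient f 0‖ ^ 2 / f 0 ∂μ := by simp
    _ ≤ ∫ z, (‖gradient f z‖ ^ 2 / f z + 2 * (L * δ / ε) +
          2 * (L * K / ε + L ^ 3 / (2 * ε ^ 2)) * ‖z‖) ∂μ :=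
        integral_mono (integrable_const _) (hmain.add (hμ.const_mul _)) fun z => by
          simpa only [sub_zero] using hf.norm_gradient_sq_div_le_add 0 z
    _ = _ := by
        rw [integral_add hmain (hμ.const_mul _), integral_add hfisher (integrable_const _),
          integral_const, probReal_univ, one_smul, integral_const_mul, fisherInfo]

lemma logSobolevUpTo_of_integral_inner_sq_le {h : ℝ} (hh : 0 ≤ h) (hμ : MemLp id 3 μ)
    (hcov : ∀ b : E, ∫ z, ⟪b, z⟫ ^ 2 ∂μ ≤ h * ‖b‖ ^ 2) :
    LogSobolevUpTo ε L δ K μ (h / 2)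
      (L * δ / ε * (h + ∫ z, ‖z‖ ^ 2 ∂μ) +
        (L * K / ε + L ^ 3 / (2 * ε ^ 2)) * (h * ∫ z, ‖z‖ ∂μ + ∫ z, ‖z‖ ^ 3 ∂μ)) := by
  intro f hf
  have hpos := hf.pos 0
  have hbase : (∫ z, ⟪gradient f 0, z⟫ ^ 2 ∂μ) / (2 * f 0) ≤
      h / 2 * (‖gradient f 0‖ ^ 2 / f 0) := by
    grw [hcov]
    exact le_of_eq (by field_simp)
  have hfisher := hf.norm_gradient_zero_sq_div_le
    (μ := μ) ((hμ.mono_exponent (by norm_num)).integrable le_rfl).norm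
  grw [hfisher] at hbase
  linarith [hf.entropy_le hμ]

variable [SecondCountableTopology E]

lemma LogSobolevUpTo.conv [IsProbabilityMeasure ν] (hC : 0 ≤ C)
    (hμ : LogSobolevUpTo ε L δ K μ C e) (hν : LogSobolevUpTo ε L δ K ν C' e') :
    LogSobolevUpTo ε L δ K (μ ∗ ν) (C + C') (e + e') := by
  intro f hf
  have hfisher : Integrable (fun x => fisherInfo ν fun z => f (x + z)) μ :=
    (integrable_translateAverage hf.integrable_norm_gradient_sq_div).congr
      (ae_of_all _ (translateAverage_norm_gradient_sq_div ν f))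
  have hinner : ∫ x, entropy ν (fun z => f (x + z)) ∂μ ≤ C' * fisherInfo (μ ∗ ν) f + e' := by
    have hentropy : Integrable (fun x => entropy ν fun z => f (x + z)) μ :=
      (integrable_translateAverage hf.integrable_mul_log).sub
        hf.translateAverage.integrable_mul_log
    have hmono := integral_mono hentropy ((hfisher.const_mul C').add (integrable_const e'))
      fun x => hν _ (hf.comp_const_add x)
    rwa [Pi.add_def, integral_add (hfisher.const_mul C') (integrable_const e'), integral_const_mul,
      integral_const, probReal_univ, one_smul,
      ← fisherInfo_conv hf.integrable_norm_gradient_sq_div] at hmono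
  calc entropy (μ ∗ ν) f
      = ∫ x, entropy ν (fun z => f (x + z)) ∂μ + entropy μ (translateAverage ν f) :=
        entropy_conv hf.integrable hf.integrable_mul_log hf.translateAverage.integrable_mul_log
    _ ≤ C' * fisherInfo (μ ∗ ν) f + e' + (C * fisherInfo (μ ∗ ν) f + e) := by
        gcongr
        grw [hμ _ hf.translateAverage, hf.fisherInfo_translateAverage_le]
    _ = (C + C') * fisherInfo (μ ∗ ν) f + (e + e') := by ring

end LogSobolevUpTo

section Gaussian

variable {E : Type*} [NormedAddCommGroup E] [InnerProductSpace ℝ E] [FiniteDimensional ℝ E]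
  [MeasurableSpace E] [BorelSpace E]

/-- The centred Gaussian measure `γ_σ` on `E` with covariance `σ • id`, as the image of the standard
Gaussian under multiplication by `√σ`. It is the Dirac mass at the origin for `σ ≤ 0`. -/
def isotropicGaussian (E : Type*) [NormedAddCommGroup E] [InnerProductSpace ℝ E]
    [FiniteDimensional ℝ E] [MeasurableSpace E] (σ : ℝ) : Measure E :=
  (stdGaussian E).map (√σ • ·)

instance isProbabilityMeasure_isotropicGaussian (σ : ℝ) :
    IsProbabilityMeasure (isotropicGaussian E σ) :=
  Measure.isProbabilityMeasure_map (by fun_prop)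

lemma charFun_isotropicGaussian {σ : ℝ} (hσ : 0 ≤ σ) (t : E) :
    charFun (isotropicGaussian E σ) t = Complex.exp (-(σ * ‖t‖ ^ 2 / 2)) := by
  rw [isotropicGaussian, charFun_map_smul, charFun_stdGaussian, norm_smul,
    Real.norm_of_nonneg (Real.sqrt_nonneg _)]
  congr 1
  push_cast
  rw [mul_pow, ← Complex.ofReal_pow √σ, Real.sq_sqrt hσ]
  ring

lemma isotropicGaussian_conv {σ τ : ℝ} (hσ : 0 ≤ σ) (hτ : 0 ≤ τ) :
    isotropicGaussian E σ ∗ isotropicGaussian E τ = isotropicGaussian E (σ + τ) := by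
  refine Measure.ext_of_charFun (funext fun t => ?_)
  rw [charFun_conv, charFun_isotropicGaussian hσ, charFun_isotropicGaussian hτ,
    charFun_isotropicGaussian (add_nonneg hσ hτ), ← Complex.exp_add]
  congr 1
  push_cast
  ring

lemma integral_norm_pow_isotropicGaussian (σ : ℝ) (k : ℕ) :
    ∫ z, ‖z‖ ^ k ∂isotropicGaussian E σ = √σ ^ k * ∫ z, ‖z‖ ^ k ∂stdGaussian E := by
  rw [isotropicGaussian, integral_map (by fun_prop) (by fun_prop), ← integral_const_mul]
  simp only [norm_smul, mul_pow, Real.norm_of_nonneg (Real.sqrt_nonneg σ)]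

lemma memLp_id_isotropicGaussian (σ : ℝ) {p : ENNReal} (hp : p ≠ ⊤) :
    MemLp id p (isotropicGaussian E σ) := by
  rw [isotropicGaussian, memLp_map_measure_iff (by fun_prop) (by fun_prop)]
  exact (IsGaussian.memLp_id (stdGaussian E) p hp).const_smul √σ

lemma integral_inner_sq_isotropicGaussian {σ : ℝ} (hσ : 0 ≤ σ) (b : E) :
    ∫ z, ⟪b, z⟫ ^ 2 ∂isotropicGaussian E σ = σ * ‖b‖ ^ 2 := by
  have hvar := variance_dual_stdGaussian (InnerProductSpace.toDual ℝ E b)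
  rw [variance_of_integral_eq_zero (by fun_prop) (integral_strongDual_stdGaussian _)] at hvar
  simp only [InnerProductSpace.toDual_apply_apply, LinearIsometryEquiv.norm_map] at hvar
  rw [isotropicGaussian, integral_map (by fun_prop) (by fun_prop), ← hvar, ← integral_const_mul]
  simp only [real_inner_smul_right, mul_pow, Real.sq_sqrt hσ]

lemma charFun_gaussMeasure (d : ℕ) {σ : ℝ} (hσ : 0 < σ) (t : EuclideanSpace ℝ (Fin d)) :
    charFun (gaussMeasure d σ) t = Complex.exp (-(σ * ‖t‖ ^ 2 / 2)) := by
  have hvar : 0 < 2 * Real.pi * σ := by positivity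
  have hrate : 0 < ((1 / (2 * σ) : ℝ) : ℂ).re := by
    rw [Complex.ofReal_re]
    positivity
  have hdensity : ∀ v : EuclideanSpace ℝ (Fin d),
      (ENNReal.ofReal ((2 * Real.pi * σ) ^ (-(d : ℝ) / 2) *
        Real.exp (-‖v‖ ^ 2 / (2 * σ)))).toReal • Complex.exp (⟪v, t⟫ * Complex.I) =
      (((2 * Real.pi * σ) ^ (-(d : ℝ) / 2) : ℝ) : ℂ) *
        Complex.exp (-((1 / (2 * σ) : ℝ) : ℂ) * ‖v‖ ^ 2 + Complex.I * ⟪t, v⟫) := by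
    intro v
    rw [ENNReal.toReal_ofReal (by positivity), Complex.real_smul, Complex.ofReal_mul, mul_assoc,
      Complex.ofReal_exp, ← Complex.exp_add, real_inner_comm]
    congr 2
    push_cast
    field_simp
  have hgauss := GaussianFourier.integral_cexp_neg_mul_sq_norm_add hrate Complex.I t
  have hpi : Real.pi / ((1 / (2 * σ) : ℝ) : ℂ) = ((2 * Real.pi * σ : ℝ) : ℂ) := by
    push_cast
    field_simp
  rw [hpi, finrank_euclideanSpace_fin] at hgauss
  rw [charFun_apply, gaussMeasure,
    integral_withDensity_eq_integral_toReal_smul (by fun_prop) (by simp)]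
  simp_rw [hdensity]
  rw [integral_const_mul, hgauss, ← mul_assoc, Complex.ofReal_cpow hvar.le,
    ← Complex.cpow_add _ _ (Complex.ofReal_ne_zero.2 hvar.ne')]
  push_cast
  rw [neg_div, neg_add_cancel, Complex.cpow_zero, one_mul, Complex.I_sq]
  congr 1
  field_simp
  norm_num

lemma isFiniteMeasure_gaussMeasure (d : ℕ) {σ : ℝ} (hσ : 0 < σ) :
    IsFiniteMeasure (gaussMeasure d σ) := by
  have hmass : (gaussMeasure d σ).real Set.univ = 1 := by
    have hchar := charFun_gaussMeasure d hσ 0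
    rw [charFun_zero, norm_zero] at hchar
    simpa using hchar
  by_contra h
  simp [Measure.real, not_isFiniteMeasure_iff.1 h] at hmass

lemma gaussMeasure_eq_isotropicGaussian (d : ℕ) {σ : ℝ} (hσ : 0 < σ) :
    gaussMeasure d σ = isotropicGaussian (EuclideanSpace ℝ (Fin d)) σ := by
  have := isFiniteMeasure_gaussMeasure d hσ
  refine Measure.ext_of_charFun (funext fun t => ?_)
  rw [charFun_gaussMeasure d hσ, charFun_isotropicGaussian hσ.le]

lemma logSobolevUpTo_isotropicGaussian (ε L δ K : ℝ) {h : ℝ} (hh : 0 ≤ h) :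
    LogSobolevUpTo ε L δ K (isotropicGaussian E h) (h / 2)
      (h * (L * δ / ε * (1 + ∫ z, ‖z‖ ^ 2 ∂stdGaussian E) + √h *
        ((L * K / ε + L ^ 3 / (2 * ε ^ 2)) *
          (∫ z, ‖z‖ ∂stdGaussian E + ∫ z, ‖z‖ ^ 3 ∂stdGaussian E)))) := by
  have hlocal := logSobolevUpTo_of_integral_inner_sq_le (ε := ε) (L := L) (δ := δ) (K := K) hh
    (memLp_id_isotropicGaussian h ENNReal.ofNat_ne_top)
    fun b : E => (integral_inner_sq_isotropicGaussian hh b).le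
  have hnorm : ∫ z, ‖z‖ ∂isotropicGaussian E h = √h * ∫ z, ‖z‖ ∂stdGaussian E := by
    simpa only [pow_one] using integral_norm_pow_isotropicGaussian h 1
  convert! hlocal using 1
  rw [hnorm, integral_norm_pow_isotropicGaussian, integral_norm_pow_isotropicGaussian,
    pow_succ √h 2, Real.sq_sqrt hh]
  ring

lemma LogSobolevUpTo.isotropicGaussian_mul {ε L δ K h C e : ℝ}
    (hstep : LogSobolevUpTo ε L δ K (isotropicGaussian E h) C e) (hh : 0 ≤ h) (hC : 0 ≤ C) (n : ℕ) :
    LogSobolevUpTo ε L δ K (isotropicGaussian E ((n + 1) * h)) ((n + 1) * C) ((n + 1) * e) := by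
  induction n with
  | zero => simpa using hstep
  | succ n ih =>
    have hconv := ih.conv (by positivity) hstep
    rw [isotropicGaussian_conv (by positivity) hh] at hconv
    simpa only [add_one_mul, Nat.cast_succ] using hconv

/-- The one-step errors are of order `h * (δ + √h)`, so summing `σ / h` of them leaves `O(σ * δ)` as
`h → 0`. -/
lemma IsAdmissible.entropy_isotropicGaussian_le {ε L δ K σ : ℝ} {f : E → ℝ}
    (hf : IsAdmissible ε L δ K f) (hσ : 0 ≤ σ) :
    entropy (isotropicGaussian E σ) f ≤ σ / 2 * fisherInfo (isotropicGaussian E σ) f +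
      σ * (L * δ / ε * (1 + ∫ z, ‖z‖ ^ 2 ∂stdGaussian E)) := by
  set a := L * δ / ε * (1 + ∫ z, ‖z‖ ^ 2 ∂stdGaussian E)
  set b := (L * K / ε + L ^ 3 / (2 * ε ^ 2)) *
    (∫ z, ‖z‖ ∂stdGaussian E + ∫ z, ‖z‖ ^ 3 ∂stdGaussian E)
  have hbound : ∀ n : ℕ, entropy (isotropicGaussian E σ) f ≤
      σ / 2 * fisherInfo (isotropicGaussian E σ) f + σ * (a + √(σ * (1 / (n + 1))) * b) := by
    intro n
    have hh : 0 ≤ σ * (1 / ((n : ℝ) + 1)) := by positivity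
    have hn : (n + 1) * (σ * (1 / ((n : ℝ) + 1))) = σ := by field_simp
    have hsteps := (logSobolevUpTo_isotropicGaussian (E := E) ε L δ K hh).isotropicGaussian_mul
      hh (by positivity) n
    have hconst : (n + 1) * (σ * (1 / ((n : ℝ) + 1)) / 2) = σ / 2 := by field_simp
    rw [hconst, hn, ← mul_assoc, hn] at hsteps
    exact hsteps f hf
  have hzero : Tendsto (fun n : ℕ => √(σ * (1 / ((n : ℝ) + 1)))) atTop (𝓝 0) := by
    simpa using (tendsto_one_div_add_atTop_nhds_zero_nat.const_mul σ).sqrt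
  have hlim := (((hzero.mul_const b).const_add a).const_mul σ).const_add
    (σ / 2 * fisherInfo (isotropicGaussian E σ) f)
  rw [zero_mul, add_zero] at hlim
  exact ge_of_tendsto' hlim hbound

end Gaussian

section CompactSupport

lemma exists_norm_sub_le_add_mul {X F : Type*} [SeminormedAddCommGroup X]
    [SeminormedAddCommGroup F] {g : X → F} (hg : UniformContinuous g) {L : ℝ}
    (hL : ∀ x, ‖g x‖ ≤ L) {δ : ℝ} (hδ : 0 < δ) :
    ∃ K, 0 ≤ K ∧ ∀ x y, ‖g y - g x‖ ≤ δ + K * ‖y - x‖ := by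
  obtain ⟨η, hη, hclose⟩ := Metric.uniformContinuous_iff.1 hg δ hδ
  have hL₀ : 0 ≤ L := (norm_nonneg _).trans (hL 0)
  refine ⟨2 * L / η, by positivity, fun x y => ?_⟩
  rcases lt_or_ge ‖y - x‖ η with h | h
  · have hlt : ‖g y - g x‖ < δ := by
      simpa only [dist_eq_norm] using hclose ((dist_eq_norm y x).trans_lt h)
    exact hlt.le.trans (le_add_of_nonneg_right (by positivity))
  · calc ‖g y - g x‖ ≤ L + L := (norm_sub_le _ _).trans (add_le_add (hL y) (hL x))
      _ = 2 * L / η * η := by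
        field_simp
        ring
      _ ≤ 2 * L / η * ‖y - x‖ := by gcongr
      _ ≤ δ + 2 * L / η * ‖y - x‖ := le_add_of_nonneg_left hδ.le

variable {E : Type*} [NormedAddCommGroup E] [InnerProductSpace ℝ E]

section

variable [CompleteSpace E]

lemma gradient_add_const (f : E → ℝ) (a : ℝ) : gradient (fun x => f x + a) = gradient f := by
  ext x : 1
  rw [gradient, gradient, fderiv_add_const]

lemma hasCompactSupport_gradient {f : E → ℝ} (hf : HasCompactSupport f) :
    HasCompactSupport (gradient f) :=
  (hf.fderiv ℝ).comp_left (map_zero (InnerProductSpace.toDual ℝ E).symm)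

lemma exists_forall_isAdmissible_add_const {φ : E → ℝ} (hφ : ContDiff ℝ 1 φ)
    (hsupp : HasCompactSupport φ) (hφ₀ : ∀ x, 0 ≤ φ x) {ε : ℝ} (hε : 0 < ε) :
    ∃ L, ∀ δ > 0, ∃ K, IsAdmissible ε L δ K (fun x => φ x + ε) := by
  obtain ⟨M, hM⟩ := hsupp.exists_bound_of_continuous hφ.continuous
  have hgrad : Continuous (gradient φ) := continuous_gradient hφ
  have hgsupp := hasCompactSupport_gradient hsupp
  obtain ⟨L, hL⟩ := hgsupp.exists_bound_of_continuous hgrad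
  refine ⟨L, fun δ hδ => ?_⟩
  obtain ⟨K, hK, hmodulus⟩ :=
    exists_norm_sub_le_add_mul (hgsupp.uniformContinuous_of_continuous hgrad) hL hδ
  refine ⟨K, hε, hK, hφ.add contDiff_const, fun x => le_add_of_nonneg_left (hφ₀ x),
    ⟨M + ε, ?_⟩, ?_, ?_⟩
  · rintro _ ⟨x, rfl⟩
    exact add_le_add_left ((le_abs_self _).trans (hM x)) ε
  · rwa [gradient_add_const]
  · rwa [gradient_add_const]

end

variable [FiniteDimensional ℝ E] [MeasurableSpace E] [BorelSpace E]

lemma entropy_isotropicGaussian_add_const_le {φ : E → ℝ} (hφ : ContDiff ℝ 1 φ)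
    (hsupp : HasCompactSupport φ) (hφ₀ : ∀ x, 0 ≤ φ x) {ε σ : ℝ} (hε : 0 < ε) (hσ : 0 ≤ σ) :
    entropy (isotropicGaussian E σ) (fun x => φ x + ε) ≤
      σ / 2 * fisherInfo (isotropicGaussian E σ) (fun x => φ x + ε) := by
  obtain ⟨L, hadm⟩ := exists_forall_isAdmissible_add_const hφ hsupp hφ₀ hε
  set I := fisherInfo (isotropicGaussian E σ) (fun x => φ x + ε)
  set m := ∫ z, ‖z‖ ^ 2 ∂stdGaussian E
  have hcont : Continuous fun δ => σ / 2 * I + σ * (L * δ / ε * (1 + m)) := by fun_prop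
  have hlim : Tendsto (fun δ => σ / 2 * I + σ * (L * δ / ε * (1 + m))) (𝓝[>] 0)
      (𝓝 (σ / 2 * I)) := by
    simpa using (hcont.tendsto 0).mono_left nhdsWithin_le_nhds
  refine ge_of_tendsto hlim (eventually_mem_nhdsWithin.mono fun δ hδ => ?_)
  obtain ⟨K, hK⟩ := hadm δ hδ
  exact hK.entropy_isotropicGaussian_le hσ

end CompactSupport

section Cutoff

variable {E : Type*} [NormedAddCommGroup E] [InnerProductSpace ℝ E]

/-- A fixed bump function dilated by `n + 1`: a cutoff equal to `1` on the ball of radius `n + 1`,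
with gradient bounded uniformly in `n`. -/
def cutoff (E : Type*) [NormedAddCommGroup E] [InnerProductSpace ℝ E] (n : ℕ) (x : E) : ℝ :=
  (⟨1, 2, one_pos, one_lt_two⟩ : ContDiffBump (0 : E)) (((n : ℝ) + 1)⁻¹ • x)

lemma contDiff_cutoff {m : ℕ∞} (n : ℕ) : ContDiff ℝ m (cutoff E n) :=
  (ContDiffBump.contDiff _).comp (contDiff_const_smul _)

lemma cutoff_nonneg (n : ℕ) (x : E) : 0 ≤ cutoff E n x := ContDiffBump.nonneg _

lemma cutoff_le_one (n : ℕ) (x : E) : cutoff E n x ≤ 1 := ContDiffBump.le_one _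

lemma eventually_cutoff_eventuallyEq_one (x : E) : ∀ᶠ n in atTop, cutoff E n =ᶠ[𝓝 x] 1 := by
  have hscale : Tendsto (fun n : ℕ => ((n : ℝ) + 1)⁻¹ • x) atTop (𝓝 0) := by
    simpa using (tendsto_one_div_add_atTop_nhds_zero_nat (𝕜 := ℝ)).smul_const x
  have hdilate (n : ℕ) : Continuous fun y : E => ((n : ℝ) + 1)⁻¹ • y := continuous_const_smul _
  filter_upwards [hscale.eventually (Metric.ball_mem_nhds 0 one_pos)] with n hn
  exact (ContDiffBump.eventuallyEq_one_of_mem_ball _ hn).comp_tendsto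
    ((hdilate n).tendsto x)

variable [FiniteDimensional ℝ E]

lemma hasCompactSupport_cutoff (n : ℕ) : HasCompactSupport (cutoff E n) :=
  (ContDiffBump.hasCompactSupport _).comp_smul (inv_ne_zero n.cast_add_one_ne_zero)

lemma exists_norm_gradient_cutoff_le (E : Type*) [NormedAddCommGroup E] [InnerProductSpace ℝ E]
    [FiniteDimensional ℝ E] : ∃ C, ∀ n (x : E), ‖gradient (cutoff E n) x‖ ≤ C := by
  let b : ContDiffBump (0 : E) := ⟨1, 2, one_pos, one_lt_two⟩
  obtain ⟨C, hC⟩ := (b.hasCompactSupport.fderiv ℝ).exists_bound_of_continuous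
    (b.contDiff.continuous_fderiv one_ne_zero)
  refine ⟨C, fun n x => ?_⟩
  have hscale : ((n : ℝ) + 1)⁻¹ ≤ 1 := inv_le_one_of_one_le₀ (by simp)
  calc ‖gradient (cutoff E n) x‖ = ‖fderiv ℝ (fun y => b (((n : ℝ) + 1)⁻¹ • y)) x‖ :=
        norm_gradient _ _
    _ = ((n : ℝ) + 1)⁻¹ * ‖fderiv ℝ b (((n : ℝ) + 1)⁻¹ • x)‖ := by
        rw [fderiv_comp_smul, norm_smul, Real.norm_of_nonneg (by positivity)]
    _ ≤ 1 * ‖fderiv ℝ b (((n : ℝ) + 1)⁻¹ • x)‖ := by gcongr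
    _ ≤ C := (one_mul _).trans_le (hC _)

end Cutoff

section Truncation

lemma abs_mul_log_le {t s : ℝ} (ht : 0 < t) (hs : 0 < s) (hts : t ≤ s + 1) :
    |t * Real.log t| ≤ |s * Real.log s| + s + 1 := by
  rcases le_total t 1 with h | h
  · have hlt := Real.abs_log_mul_self_lt t ht h
    rw [mul_comm] at hlt
    exact hlt.le.trans (le_add_of_nonneg_left (by positivity))
  have hlog : Real.log (s + 1) ≤ Real.log s + 1 / s := by
    have hfactor : s + 1 = s * (1 + 1 / s) := by field_simp
    rw [hfactor, Real.log_mul hs.ne' (by positivity)]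
    grw [Real.log_le_sub_one_of_pos (by positivity : 0 < 1 + 1 / s), add_sub_cancel_left]
  have hlog' : Real.log (s + 1) ≤ s := by
    simpa using Real.log_le_sub_one_of_pos (add_pos hs one_pos)
  calc |t * Real.log t| = t * Real.log t :=
        abs_of_nonneg (mul_nonneg ht.le (Real.log_nonneg h))
    _ ≤ (s + 1) * Real.log (s + 1) := by
        gcongr
        exact Real.log_nonneg h
    _ = s * Real.log (s + 1) + Real.log (s + 1) := add_one_mul _ _
    _ ≤ s * (Real.log s + 1 / s) + s := by gcongr
    _ = s * Real.log s + s + 1 := by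
        field_simp
        ring
    _ ≤ |s * Real.log s| + s + 1 := by grw [← le_abs_self]

variable {E : Type*} [NormedAddCommGroup E] [InnerProductSpace ℝ E] {f : E → ℝ}

/-- The truncation `χ_n² f + 1 / (n + 1)` of `f`, where `χ_n` is the cutoff. The cutoff is squared
so that the Fisher information stays bounded where `χ_n` vanishes. -/
def truncation (f : E → ℝ) (n : ℕ) (x : E) : ℝ := cutoff E n x ^ 2 * f x + 1 / ((n : ℝ) + 1)

lemma contDiff_truncation (hf : ContDiff ℝ 1 f) (n : ℕ) : ContDiff ℝ 1 (truncation f n) :=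
  (((contDiff_cutoff n).pow 2).mul hf).add contDiff_const

lemma truncation_pos (hf : ∀ x, 0 < f x) (n : ℕ) (x : E) : 0 < truncation f n x :=
  add_pos_of_nonneg_of_pos (mul_nonneg (sq_nonneg _) (hf x).le) Nat.one_div_pos_of_nat

lemma truncation_le (hf : ∀ x, 0 < f x) (n : ℕ) (x : E) : truncation f n x ≤ f x + 1 := by
  have hcutoff : cutoff E n x ^ 2 ≤ 1 := pow_le_one₀ (cutoff_nonneg n x) (cutoff_le_one n x)
  have hn : 1 / ((n : ℝ) + 1) ≤ 1 := div_le_one_of_le₀ (by simp) (by positivity)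
  exact add_le_add (mul_le_of_le_one_left (hf x).le hcutoff) hn

lemma eventually_truncation_eventuallyEq (f : E → ℝ) (x : E) :
    ∀ᶠ n : ℕ in atTop, truncation f n =ᶠ[𝓝 x] fun y => f y + 1 / ((n : ℝ) + 1) := by
  filter_upwards [eventually_cutoff_eventuallyEq_one x] with n hn
  filter_upwards [hn] with y hy
  simp [truncation, hy]

lemma tendsto_truncation (f : E → ℝ) (x : E) :
    Tendsto (fun n => truncation f n x) atTop (𝓝 (f x)) := by
  have hlim : Tendsto (fun n : ℕ => f x + 1 / ((n : ℝ) + 1)) atTop (𝓝 (f x)) := by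
    simpa using tendsto_one_div_add_atTop_nhds_zero_nat.const_add (f x)
  refine hlim.congr' ?_
  filter_upwards [eventually_truncation_eventuallyEq f x] with n hn using hn.self_of_nhds.symm

section

variable [CompleteSpace E]

lemma eventually_gradient_truncation_eq (f : E → ℝ) (x : E) :
    ∀ᶠ n in atTop, gradient (truncation f n) x = gradient f x := by
  filter_upwards [eventually_truncation_eventuallyEq f x] with n hn
  rw [hn.gradient_eq, gradient_add_const]

lemma gradient_truncation (hf : Differentiable ℝ f) (n : ℕ) (x : E) :
    gradient (truncation f n) x = cutoff E n x •
      (cutoff E n x • gradient f x + (2 * f x) • gradient (cutoff E n) x) := by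
  have hcutoff : HasFDerivAt (cutoff E n) (fderiv ℝ (cutoff E n) x) x :=
    ((contDiff_cutoff (m := 1) n).differentiable one_ne_zero x).hasFDerivAt
  have hderiv : fderiv ℝ (truncation f n) x = _ :=
    (((hcutoff.pow 2).mul (hf x).hasFDerivAt).add_const (1 / ((n : ℝ) + 1))).fderiv
  simp only [gradient, ← map_smul, ← map_add, hderiv]
  congr 1
  module

lemma norm_gradient_truncation_sq_div_le {C : ℝ}
    (hC : ∀ n (x : E), ‖gradient (cutoff E n) x‖ ≤ C) (hf : Differentiable ℝ f)
    (hpos : ∀ x, 0 < f x) (n : ℕ) (x : E) :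
    ‖gradient (truncation f n) x‖ ^ 2 / truncation f n x ≤
      2 * (‖gradient f x‖ ^ 2 / f x) + 8 * C ^ 2 * f x := by
  have hx := hpos x
  have hχ := cutoff_nonneg n x
  have hn : 0 < 1 / ((n : ℝ) + 1) := Nat.one_div_pos_of_nat
  have hnorm : ‖gradient (truncation f n) x‖ ≤ cutoff E n x * (‖gradient f x‖ + 2 * f x * C) := by
    rw [gradient_truncation hf, norm_smul, Real.norm_of_nonneg hχ]
    gcongr
    refine (norm_add_le _ _).trans ?_
    rw [norm_smul, norm_smul, Real.norm_of_nonneg hχ, Real.norm_of_nonneg (by positivity)]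
    grw [cutoff_le_one, one_mul, hC]
  rw [div_le_iff₀ (truncation_pos hpos n x)]
  calc ‖gradient (truncation f n) x‖ ^ 2
      ≤ (cutoff E n x * (‖gradient f x‖ + 2 * f x * C)) ^ 2 := by gcongr
    _ ≤ cutoff E n x ^ 2 * (2 * (‖gradient f x‖ ^ 2 + (2 * f x * C) ^ 2)) := by
        rw [mul_pow]
        gcongr
        exact add_sq_le
    _ = (2 * (‖gradient f x‖ ^ 2 / f x) + 8 * C ^ 2 * f x) * (cutoff E n x ^ 2 * f x) := by
        field_simp
        ring
    _ ≤ _ := by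
        gcongr
        exact le_add_of_nonneg_right hn.le

end

variable [MeasurableSpace E] [BorelSpace E] {μ : Measure E}

lemma tendsto_fisherInfo_truncation [FiniteDimensional ℝ E] (hf : ContDiff ℝ 1 f)
    (hpos : ∀ x, 0 < f x) (hint : Integrable f μ)
    (hfisher : Integrable (fun x => ‖gradient f x‖ ^ 2 / f x) μ) :
    Tendsto (fun n => fisherInfo μ (truncation f n)) atTop (𝓝 (fisherInfo μ f)) := by
  obtain ⟨C, hC⟩ := exists_norm_gradient_cutoff_le E
  refine tendsto_integral_of_dominated_convergence
    (fun x => 2 * (‖gradient f x‖ ^ 2 / f x) + 8 * C ^ 2 * f x)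
    (fun n => ?_) ((hfisher.const_mul 2).add (hint.const_mul (8 * C ^ 2)))
    (fun n => ae_of_all _ fun x => ?_) (ae_of_all _ fun x => ?_)
  · have hcont := contDiff_truncation hf n
    exact (((continuous_gradient hcont).norm.pow 2).div hcont.continuous
      fun x => (truncation_pos hpos n x).ne').aestronglyMeasurable
  · rw [Real.norm_of_nonneg (div_nonneg (sq_nonneg _) (truncation_pos hpos n x).le)]
    exact norm_gradient_truncation_sq_div_le hC (hf.differentiable one_ne_zero) hpos n x
  · have hlim : Tendsto (fun n => ‖gradient f x‖ ^ 2 / truncation f n x) atTop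
        (𝓝 (‖gradient f x‖ ^ 2 / f x)) :=
      tendsto_const_nhds.div (tendsto_truncation f x) (hpos x).ne'
    refine hlim.congr' ?_
    filter_upwards [eventually_gradient_truncation_eq f x] with n hn
    rw [hn]

variable [IsFiniteMeasure μ]

lemma tendsto_integral_truncation (hf : ContDiff ℝ 1 f) (hpos : ∀ x, 0 < f x)
    (hint : Integrable f μ) :
    Tendsto (fun n => ∫ x, truncation f n x ∂μ) atTop (𝓝 (∫ x, f x ∂μ)) := by
  refine tendsto_integral_of_dominated_convergence (fun x => f x + 1)
    (fun n => (contDiff_truncation hf n).continuous.aestronglyMeasurable)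
    (hint.add (integrable_const 1)) (fun n => ae_of_all _ fun x => ?_)
    (ae_of_all _ (tendsto_truncation f))
  rw [Real.norm_of_nonneg (truncation_pos hpos n x).le]
  exact truncation_le hpos n x

lemma tendsto_entropy_truncation (hf : ContDiff ℝ 1 f) (hpos : ∀ x, 0 < f x)
    (hint : Integrable f μ) (hlog : Integrable (fun x => f x * Real.log (f x)) μ) :
    Tendsto (fun n => entropy μ (truncation f n)) atTop (𝓝 (entropy μ f)) := by
  refine Tendsto.sub (tendsto_integral_of_dominated_convergence
    (fun x => |f x * Real.log (f x)| + f x + 1)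
    (fun n => (Real.continuous_mul_log.comp
      (contDiff_truncation hf n).continuous).aestronglyMeasurable)
    ((hlog.abs.add hint).add (integrable_const 1))
    (fun n => ae_of_all _ fun x => ?_)
    (ae_of_all _ fun x => (Real.continuous_mul_log.tendsto _).comp (tendsto_truncation f x)))
    ((Real.continuous_mul_log.tendsto _).comp (tendsto_integral_truncation hf hpos hint))
  exact abs_mul_log_le (truncation_pos hpos n x) (hpos x) (truncation_le hpos n x)

end Truncation

end GaussianLogSobolev

open GaussianLogSobolev in
theorem stmt18_general {E : Type*} [NormedAddCommGroup E] [InnerProductSpace ℝ E]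
    [FiniteDimensional ℝ E] [MeasurableSpace E] [BorelSpace E] {σ : ℝ} (hσ : 0 ≤ σ) {f : E → ℝ}
    (hf : ContDiff ℝ 1 f) (hpos : ∀ x, 0 < f x) (hint : Integrable f (isotropicGaussian E σ))
    (hlog : Integrable (fun x => f x * Real.log (f x)) (isotropicGaussian E σ))
    (hfisher : Integrable (fun x => ‖gradient f x‖ ^ 2 / f x) (isotropicGaussian E σ)) :
    entropy (isotropicGaussian E σ) f ≤ σ / 2 * fisherInfo (isotropicGaussian E σ) f := by
  refine le_of_tendsto_of_tendsto' (tendsto_entropy_truncation hf hpos hint hlog)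
    ((tendsto_fisherInfo_truncation hf hpos hint hfisher).const_mul (σ / 2)) fun n => ?_
  have hsupp : HasCompactSupport fun x => cutoff E n x ^ 2 * f x :=
    ((hasCompactSupport_cutoff n).comp_left (zero_pow two_ne_zero)).mul_right
  exact entropy_isotropicGaussian_add_const_le (((contDiff_cutoff n).pow 2).mul hf) hsupp
    (fun x => mul_nonneg (sq_nonneg _) (hpos x).le) Nat.one_div_pos_of_nat hσ

/-- Logarithmic Sobolev inequality for the Gaussian measure of variance σ:
Ent_{γ_σ}(f) ≤ (σ/2) ∫ |∇f|²/f dγ_σ. -/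
theorem stmt18 (d : ℕ) (σ : ℝ) (hσ : 0 < σ)
    (f : EuclideanSpace ℝ (Fin d) → ℝ) (hf : ContDiff ℝ (⊤ : ℕ∞) f)
    (hfpos : ∀ y, 0 < f y)
    (hint1 : Integrable f (gaussMeasure d σ))
    (hint2 : Integrable (fun y => f y * Real.log (f y)) (gaussMeasure d σ))
    (hint3 : Integrable (fun y => ‖gradient f y‖ ^ 2 / f y) (gaussMeasure d σ)) :
    (∫ y, f y * Real.log (f y) ∂gaussMeasure d σ)
        - (∫ y, f y ∂gaussMeasure d σ) * Real.log (∫ y, f y ∂gaussMeasure d σ)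
      ≤ σ / 2 * ∫ y, ‖gradient f y‖ ^ 2 / f y ∂gaussMeasure d σ := by
  rw [GaussianLogSobolev.gaussMeasure_eq_isotropicGaussian d hσ] at hint1 hint2 hint3 ⊢
  exact stmt18_general hσ.le (hf.of_le (by exact_mod_cast le_top)) hfpos hint1 hint2 hint3
end
end
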